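/- Fix ρ ∈ (0,1) and α ∈ (0,1). Let (α_n) be a sequence in (0,1) with n·α_n → α, and let c_n be defined by Φ(−c_n) = α_n. Then n·∫_ℝ Φ(d(ρ,c_n,z))^{n−1}·φ(d(ρ,c_n,z))·|G(ρ,c_n,z)|·φ(z) dz → 0 as n → ∞, where G(ρ,c,z) = (c + z/√ρ)/(2(1−ρ)^{3/2}). -/

import Mathlib

open MeasureTheory Filter

/-- The standard normal density. -/
noncomputable def phi (x : ℝ) : ℝ := (Real.sqrt (2 * Real.pi))⁻¹ * Real.exp (-x ^ 2 / 2)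

/-- The standard normal cumulative distribution function. -/
noncomputable def Phi (x : ℝ) : ℝ := ∫ t in Set.Iic x, phi t

/-- d(ρ,c,z) = (c + √ρ·z)/√(1−ρ). -/
noncomputable def dd (ρ c z : ℝ) : ℝ := (c + Real.sqrt ρ * z) / Real.sqrt (1 - ρ)

/-- G(ρ,c,z) = (c + z/√ρ)/(2(1−ρ)^{3/2}). -/
noncomputable def G (ρ c z : ℝ) : ℝ :=
  (c + z / Real.sqrt ρ) / (2 * (1 - ρ) ^ ((3 : ℝ) / 2))

/-- H_n(ρ,c) = ∫ Φ(d(ρ,c,z))^n φ(z) dz. -/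
noncomputable def Hn (n : ℕ) (ρ c : ℝ) : ℝ := ∫ z : ℝ, (Phi (dd ρ c z)) ^ n * phi z

/-!
Write `σ = √(1 - ρ)` and `r = √ρ`. The substitution `z = σ w - r c` is the second half of the
rotation `(c, w) ↦ (d, z)` with `d = σ c + r w`, so `φ(d) φ(z) = φ(c) φ(w)`, and it makes `G` a
multiple of `w`. The integral is therefore a constant times
`φ(c) ∫ Φ(σ c + r w)^(n-1) |w| φ(w) dw`. Fix `σ < k < 1` and split at `w = δ c`, where
`σ + r δ = k`.
* For `w ≤ δ c` the power is at most `Φ(k c)^(n-1)`. A binomial probability is at most one, so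
  `n Φ(-k c) Φ(k c)^(n-1) ≤ 1`, and this part is `O(φ(c) / Φ(-k c))`, which vanishes as `k < 1`.
* The part `w > δ c` is at most `n φ(c) φ(δ c) = n Φ(-c) · φ(c) φ(δ c) / Φ(-c)`, a bounded
  factor times a vanishing one.
-/

open ProbabilityTheory Set Asymptotics Topology

lemma phi_eq_gaussianPDFReal : phi = gaussianPDFReal 0 1 := by
  ext x
  simp [phi, gaussianPDFReal]

lemma phi_pos (x : ℝ) : 0 < phi x :=
  phi_eq_gaussianPDFReal ▸ gaussianPDFReal_pos 0 1 x one_ne_zero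

lemma integrable_phi : Integrable phi :=
  phi_eq_gaussianPDFReal ▸ integrable_gaussianPDFReal 0 1

lemma integral_phi : ∫ x, phi x = 1 := by
  rw [phi_eq_gaussianPDFReal, integral_gaussianPDFReal_eq_one 0 one_ne_zero]

lemma phi_neg (x : ℝ) : phi (-x) = phi x := by
  simp [phi]

lemma phi_le_phi_of_sq_le {x y : ℝ} (h : y ^ 2 ≤ x ^ 2) : phi x ≤ phi y := by
  unfold phi
  gcongr

lemma phi_mul_phi_eq_of_sq_add_sq_eq {x y u v : ℝ} (h : x ^ 2 + y ^ 2 = u ^ 2 + v ^ 2) :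
    phi x * phi y = phi u * phi v := by
  have hexponent : -x ^ 2 / 2 + -y ^ 2 / 2 = -u ^ 2 / 2 + -v ^ 2 / 2 := by linarith
  unfold phi
  rw [mul_mul_mul_comm, ← Real.exp_add, hexponent, Real.exp_add, mul_mul_mul_comm]

lemma phi_div_phi (x y : ℝ) : phi x / phi y = Real.exp (-((x ^ 2 - y ^ 2) / 2)) := by
  have hconst : (√(2 * Real.pi))⁻¹ ≠ 0 := by positivity
  rw [phi, phi, mul_div_mul_left _ _ hconst, ← Real.exp_sub]
  ring_nf

lemma hasDerivAt_phi (x : ℝ) : HasDerivAt phi (-x * phi x) x := by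
  have hexponent : HasDerivAt (fun y : ℝ => -y ^ 2 / 2) (-x) x :=
    ((hasDerivAt_pow 2 x).neg.div_const 2).congr_deriv (by ring)
  exact (hexponent.exp.const_mul _).congr_deriv (by rw [phi]; ring)

lemma integrable_id_mul_phi : Integrable fun x => x * phi x := by
  refine ((integrable_mul_exp_neg_mul_sq one_half_pos).const_mul (√(2 * Real.pi))⁻¹).congr
    (.of_forall fun x => ?_)
  simp only [phi]
  ring_nf

lemma integrable_abs_mul_phi : Integrable fun x => |x| * phi x := by
  simpa only [abs_mul, abs_of_pos (phi_pos _)] using integrable_id_mul_phi.abs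

lemma tendsto_phi_atTop : Tendsto phi atTop (𝓝 0) :=
  tendsto_zero_of_hasDerivAt_of_integrableOn_Ioi (a := 0) (fun x _ => hasDerivAt_phi x)
    (by simpa only [neg_mul] using integrable_id_mul_phi.fun_neg.integrableOn)
    integrable_phi.integrableOn

lemma setIntegral_Ioi_abs_mul_phi {t : ℝ} (ht : 0 ≤ t) : ∫ x in Ioi t, |x| * phi x = phi t := by
  have hderiv (x : ℝ) : HasDerivAt (fun y => -phi y) (x * phi x) x :=
    (hasDerivAt_phi x).neg.congr_deriv (by ring)
  calc ∫ x in Ioi t, |x| * phi x = ∫ x in Ioi t, x * phi x :=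
        setIntegral_congr_fun measurableSet_Ioi fun x hx => by
          simp only [abs_of_pos (ht.trans_lt hx)]
    _ = -0 - -phi t := integral_Ioi_of_hasDerivAt_of_tendsto' (fun x _ => hderiv x)
          integrable_id_mul_phi.integrableOn tendsto_phi_atTop.neg
    _ = phi t := by ring

lemma Phi_eq_cdf_gaussianReal : Phi = cdf (gaussianReal 0 1) := by
  ext x
  rw [cdf_eq_real, measureReal_def, gaussianReal_apply_eq_integral 0 one_ne_zero,
    ← phi_eq_gaussianPDFReal, ENNReal.toReal_ofReal (integral_nonneg fun t => (phi_pos t).le), Phi]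

lemma monotone_Phi : Monotone Phi :=
  Phi_eq_cdf_gaussianReal ▸ monotone_cdf _

lemma Phi_nonneg (x : ℝ) : 0 ≤ Phi x :=
  Phi_eq_cdf_gaussianReal ▸ cdf_nonneg _ x

lemma Phi_le_one (x : ℝ) : Phi x ≤ 1 :=
  Phi_eq_cdf_gaussianReal ▸ cdf_le_one _ x

lemma Phi_neg (x : ℝ) : Phi (-x) = 1 - Phi x := by
  have hupper : Phi (-x) = ∫ t in Ioi x, phi t := by
    simpa only [Phi, phi_neg, neg_neg] using integral_comp_neg_Iic (-x) phi
  rw [hupper, eq_sub_iff_add_eq', ← integral_phi]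
  exact intervalIntegral.integral_Iic_add_Ioi integrable_phi.integrableOn
    integrable_phi.integrableOn

lemma phi_add_one_le_Phi_neg {x : ℝ} (hx : -(1 / 2) ≤ x) : phi (x + 1) ≤ Phi (-x) :=
  calc phi (x + 1) = ∫ _ in Icc (-x - 1) (-x), phi (x + 1) := by simp
    _ ≤ ∫ t in Icc (-x - 1) (-x), phi t :=
        setIntegral_mono_on (by simp) integrable_phi.integrableOn measurableSet_Icc fun t ht =>
          phi_le_phi_of_sq_le (by nlinarith [ht.1, ht.2])
    _ ≤ Phi (-x) := setIntegral_mono_set integrable_phi.integrableOn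
        (.of_forall fun t => (phi_pos t).le) Icc_subset_Iic_self.eventuallyLE

lemma Phi_pos (x : ℝ) : 0 < Phi x :=
  calc 0 < phi (|x| + 1) := phi_pos _
    _ ≤ Phi (-|x|) := phi_add_one_le_Phi_neg (by linarith [abs_nonneg x])
    _ ≤ Phi x := monotone_Phi (neg_abs_le x)

lemma tendsto_atTop_of_tendsto_Phi_neg {ι : Type*} {l : Filter ι} {c : ι → ℝ}
    (h : Tendsto (fun i => Phi (-c i)) l (𝓝 0)) : Tendsto c l atTop := by
  refine tendsto_atTop.2 fun M => ?_
  filter_upwards [h.eventually_lt_const (Phi_pos (-M))] with i hi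
  exact (neg_lt_neg_iff.1 (monotone_Phi.reflect_lt hi)).le

lemma tendsto_phi_mul_div_Phi_neg_mul {a k : ℝ} (hk : 0 ≤ k) (hka : k < a) :
    Tendsto (fun x => phi (a * x) / Phi (-(k * x))) atTop (𝓝 0) := by
  have hexponent : Tendsto (fun x => ((a * x) ^ 2 - (k * x + 1) ^ 2) / 2) atTop atTop := by
    have hsub : Tendsto (fun x => (a - k) * x - 1) atTop atTop :=
      tendsto_atTop_add_const_right _ _ (tendsto_id.const_mul_atTop (sub_pos.2 hka))
    have hadd : Tendsto (fun x => (a + k) * x + 1) atTop atTop :=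
      tendsto_atTop_add_const_right _ _ (tendsto_id.const_mul_atTop (by linarith))
    refine ((hsub.atTop_mul_atTop₀ hadd).atTop_div_const two_pos).congr fun x => ?_
    ring
  refine squeeze_zero' (.of_forall fun x => div_nonneg (phi_pos _).le (Phi_nonneg _)) ?_
    (Real.tendsto_exp_neg_atTop_nhds_zero.comp hexponent)
  filter_upwards [eventually_ge_atTop 0] with x hx
  calc phi (a * x) / Phi (-(k * x)) ≤ phi (a * x) / phi (k * x + 1) :=
        div_le_div_of_nonneg_left (phi_pos _).le (phi_pos _)
          (phi_add_one_le_Phi_neg (by nlinarith [mul_nonneg hk hx]))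
    _ = _ := phi_div_phi _ _

lemma choose_mul_pow_mul_one_sub_pow_le_one {p : ℝ} (hp0 : 0 ≤ p) (hp1 : p ≤ 1) {n m : ℕ}
    (hm : m ≤ n) : n.choose m * p ^ m * (1 - p) ^ (n - m) ≤ 1 := by
  calc n.choose m * p ^ m * (1 - p) ^ (n - m)
      = p ^ m * (1 - p) ^ (n - m) * n.choose m := by ring
    _ ≤ ∑ i ∈ Finset.range (n + 1), p ^ i * (1 - p) ^ (n - i) * n.choose i :=
        Finset.single_le_sum (f := fun i => p ^ i * (1 - p) ^ (n - i) * n.choose i)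
          (fun i _ => mul_nonneg (mul_nonneg (pow_nonneg hp0 i)
            (pow_nonneg (sub_nonneg.2 hp1) _)) (Nat.cast_nonneg _)) (Finset.mem_range_succ_iff.2 hm)
    _ = 1 := by rw [← add_pow, add_sub_cancel, one_pow]

lemma natCast_mul_Phi_pow_le (n : ℕ) (x : ℝ) : n * Phi x ^ (n - 1) ≤ (Phi (-x))⁻¹ := by
  rcases n.eq_zero_or_pos with rfl | hn
  · simpa using Phi_nonneg (-x)
  · rw [← one_div, le_div_iff₀ (Phi_pos _), mul_right_comm]
    simpa [Phi_neg x] using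
      choose_mul_pow_mul_one_sub_pow_le_one (Phi_nonneg (-x)) (Phi_le_one (-x)) hn

lemma integral_mul_le_add_setIntegral_Ioi_of_monotone {f g : ℝ → ℝ} {μ : Measure ℝ}
    (hf : Monotone f) (hf0 : ∀ x, 0 ≤ f x) (hf1 : ∀ x, f x ≤ 1) (hg0 : ∀ x, 0 ≤ g x)
    (hg : Integrable g μ) (t : ℝ) :
    ∫ x, f x * g x ∂μ ≤ f t * ∫ x, g x ∂μ + ∫ x in Ioi t, g x ∂μ := by
  have htail : Integrable ((Ioi t).indicator g) μ := hg.indicator measurableSet_Ioi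
  rw [← integral_const_mul, ← integral_indicator measurableSet_Ioi,
    ← integral_add (hg.const_mul _) htail]
  refine integral_mono_of_nonneg (.of_forall fun x => mul_nonneg (hf0 x) (hg0 x))
    ((hg.const_mul _).add htail) (.of_forall fun x => ?_)
  rcases le_or_gt x t with hx | hx
  · simpa [hx.not_gt] using mul_le_mul_of_nonneg_right (hf hx) (hg0 x)
  · simpa [hx] using (mul_le_of_le_one_left (hg0 x) (hf1 x)).trans
      (le_add_of_nonneg_left (mul_nonneg (hf0 t) (hg0 x)))

lemma integral_eq_mul_integral_comp_mul_sub {E : Type*} [NormedAddCommGroup E] [NormedSpace ℝ E]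
    (f : ℝ → E) {a : ℝ} (ha : 0 < a) (b : ℝ) :
    ∫ z, f z = a • ∫ w, f (a * w - b) := by
  rw [Measure.integral_comp_mul_left (fun z => f (z - b)) a, abs_of_pos (inv_pos.2 ha),
    smul_inv_smul₀ ha.ne', integral_sub_right_eq_self]

section Rotation

variable {ρ : ℝ} (hρ : ρ ∈ Ioo (0 : ℝ) 1)
include hρ

lemma dd_sqrt_mul_sub (c w : ℝ) :
    dd ρ c (√(1 - ρ) * w - √ρ * c) = √(1 - ρ) * c + √ρ * w := by
  have hσ : 0 < √(1 - ρ) := Real.sqrt_pos.2 (sub_pos.2 hρ.2)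
  rw [dd, div_eq_iff hσ.ne']
  linear_combination (-c) * Real.sq_sqrt hρ.1.le - c * Real.sq_sqrt (sub_pos.2 hρ.2).le

lemma phi_dd_mul_phi_sqrt_mul_sub (c w : ℝ) :
    phi (dd ρ c (√(1 - ρ) * w - √ρ * c)) * phi (√(1 - ρ) * w - √ρ * c) = phi c * phi w := by
  rw [dd_sqrt_mul_sub hρ]
  apply phi_mul_phi_eq_of_sq_add_sq_eq
  linear_combination
    (c ^ 2 + w ^ 2) * (Real.sq_sqrt hρ.1.le + Real.sq_sqrt (sub_pos.2 hρ.2).le)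

lemma abs_G_sqrt_mul_sub (c w : ℝ) :
    |G ρ c (√(1 - ρ) * w - √ρ * c)| = |w| / (2 * √ρ * (1 - ρ)) := by
  have hr : 0 < √ρ := Real.sqrt_pos.2 hρ.1
  have hρ1 : 0 < 1 - ρ := sub_pos.2 hρ.2
  have hpow : (1 - ρ) ^ ((3 : ℝ) / 2) = (1 - ρ) * √(1 - ρ) := by
    rw [Real.sqrt_eq_rpow, ← Real.rpow_one_add' hρ1.le (by norm_num)]
    norm_num
  have hG : G ρ c (√(1 - ρ) * w - √ρ * c) = w / (2 * √ρ * (1 - ρ)) := by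
    rw [G, hpow]
    field_simp
    ring
  rw [hG, abs_div, abs_of_pos (by positivity : 0 < 2 * √ρ * (1 - ρ))]

lemma integral_Phi_dd_pow_mul_eq (m : ℕ) (c : ℝ) :
    ∫ z, Phi (dd ρ c z) ^ m * phi (dd ρ c z) * |G ρ c z| * phi z =
      phi c / (2 * √ρ * √(1 - ρ)) *
        ∫ w, Phi (√(1 - ρ) * c + √ρ * w) ^ m * (|w| * phi w) := by
  have hσ : 0 < √(1 - ρ) := Real.sqrt_pos.2 (sub_pos.2 hρ.2)
  rw [integral_eq_mul_integral_comp_mul_sub _ hσ (√ρ * c), smul_eq_mul, ← integral_const_mul,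
    ← integral_const_mul]
  congr with w
  set z := √(1 - ρ) * w - √ρ * c
  have hfactor : √(1 - ρ) * (|w| / (2 * √ρ * (1 - ρ))) = |w| / (2 * √ρ * √(1 - ρ)) := by
    nth_rw 2 [← Real.mul_self_sqrt (sub_pos.2 hρ.2).le]
    field_simp
  calc √(1 - ρ) * (Phi (dd ρ c z) ^ m * phi (dd ρ c z) * |G ρ c z| * phi z)
      = √(1 - ρ) * |G ρ c z| * Phi (dd ρ c z) ^ m * (phi (dd ρ c z) * phi z) := by ring
    _ = |w| / (2 * √ρ * √(1 - ρ)) * Phi (√(1 - ρ) * c + √ρ * w) ^ m * (phi c * phi w) := by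
        rw [phi_dd_mul_phi_sqrt_mul_sub hρ, abs_G_sqrt_mul_sub hρ, dd_sqrt_mul_sub hρ, hfactor]
    _ = phi c / (2 * √ρ * √(1 - ρ)) *
          (Phi (√(1 - ρ) * c + √ρ * w) ^ m * (|w| * phi w)) := by ring

lemma integral_Phi_dd_pow_mul_le (m : ℕ) {c t : ℝ} (ht : 0 ≤ t) :
    ∫ z, Phi (dd ρ c z) ^ m * phi (dd ρ c z) * |G ρ c z| * phi z ≤
      phi c / (2 * √ρ * √(1 - ρ)) *
        (Phi (√(1 - ρ) * c + √ρ * t) ^ m * (∫ w, |w| * phi w) + phi t) := by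
  have hmono : Monotone fun w => Phi (√(1 - ρ) * c + √ρ * w) ^ m := fun v w hvw =>
    pow_le_pow_left₀ (Phi_nonneg _) (monotone_Phi (by gcongr)) m
  rw [integral_Phi_dd_pow_mul_eq hρ, ← setIntegral_Ioi_abs_mul_phi ht]
  refine mul_le_mul_of_nonneg_left ?_ (div_nonneg (phi_pos c).le (by positivity))
  exact integral_mul_le_add_setIntegral_Ioi_of_monotone hmono
    (fun w => pow_nonneg (Phi_nonneg _) m) (fun w => pow_le_one₀ (Phi_nonneg _) (Phi_le_one _))
    (fun w => mul_nonneg (abs_nonneg w) (phi_pos w).le) integrable_abs_mul_phi t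

end Rotation

section Limits

variable {ι : Type*} {l : Filter ι} {c : ι → ℝ}

lemma tendsto_natCast_mul_phi_mul_Phi_pow (N : ι → ℕ) (hc : Tendsto c l atTop) {k : ℝ}
    (hk0 : 0 ≤ k) (hk1 : k < 1) :
    Tendsto (fun i => N i * phi (c i) * Phi (k * c i) ^ (N i - 1)) l (𝓝 0) := by
  have hratio := (tendsto_phi_mul_div_Phi_neg_mul hk0 hk1).comp hc
  refine squeeze_zero (fun i => ?_) (fun i => ?_) hratio
  · exact mul_nonneg (mul_nonneg (N i).cast_nonneg (phi_pos _).le) (pow_nonneg (Phi_nonneg _) _)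
  · calc N i * phi (c i) * Phi (k * c i) ^ (N i - 1)
        = phi (c i) * (N i * Phi (k * c i) ^ (N i - 1)) := by ring
      _ ≤ phi (c i) * (Phi (-(k * c i)))⁻¹ :=
          mul_le_mul_of_nonneg_left (natCast_mul_Phi_pow_le (N i) _) (phi_pos _).le
      _ = phi (1 * c i) / Phi (-(k * c i)) := by rw [one_mul, div_eq_mul_inv]

lemma tendsto_atTop_of_mul_Phi_neg_isBigO_one {s : ι → ℝ} (hs : Tendsto s l atTop)
    (hsc : (fun i => s i * Phi (-c i)) =O[l] (fun _ => (1 : ℝ))) : Tendsto c l atTop := by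
  refine tendsto_atTop_of_tendsto_Phi_neg ?_
  have hinv := (isLittleO_one_iff ℝ).2 (tendsto_inv_atTop_zero.comp hs)
  have hprod := (hsc.mul_isLittleO hinv).congr_right fun _ => one_mul 1
  refine ((isLittleO_one_iff ℝ).1 hprod).congr' ?_
  filter_upwards [hs.eventually_ne_atTop 0] with i hi
  rw [Function.comp, mul_right_comm, mul_inv_cancel₀ hi, one_mul]

lemma tendsto_mul_phi_mul_phi {s : ι → ℝ} (hc : Tendsto c l atTop)
    (hsc : (fun i => s i * Phi (-c i)) =O[l] (fun _ => (1 : ℝ))) {δ : ℝ} (hδ : δ ≠ 0) :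
    Tendsto (fun i => s i * phi (c i) * phi (δ * c i)) l (𝓝 0) := by
  have hδ1 : 1 < √(1 + δ ^ 2) := Real.lt_sqrt_of_sq_lt (by linarith [sq_pos_of_ne_zero hδ])
  have hratio := ((tendsto_phi_mul_div_Phi_neg_mul zero_le_one hδ1).comp hc).const_mul (phi 0)
  rw [mul_zero] at hratio
  have hprod := (hsc.mul_isLittleO ((isLittleO_one_iff ℝ).2 hratio)).congr_right fun _ => one_mul 1
  refine ((isLittleO_one_iff ℝ).1 hprod).congr fun i => ?_
  have hrot : phi (c i) * phi (δ * c i) = phi 0 * phi (√(1 + δ ^ 2) * c i) :=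
    phi_mul_phi_eq_of_sq_add_sq_eq
      (by rw [mul_pow, mul_pow, Real.sq_sqrt (by positivity)]; ring)
  have hPhi : Phi (-c i) ≠ 0 := (Phi_pos _).ne'
  rw [mul_assoc _ (phi (c i)), hrot, Function.comp, one_mul]
  field_simp

end Limits

theorem second_term_tendsto_zero_general {ρ : ℝ} (hρ : ρ ∈ Ioo (0 : ℝ) 1) {c : ℕ → ℝ}
    (hc : (fun n : ℕ => n * Phi (-c n)) =O[atTop] (fun _ => (1 : ℝ))) :
    Tendsto (fun n : ℕ => (n : ℝ) * ∫ z : ℝ,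
        Phi (dd ρ (c n) z) ^ (n - 1) * phi (dd ρ (c n) z) * |G ρ (c n) z| * phi z)
      atTop (𝓝 0) := by
  have hctop := tendsto_atTop_of_mul_Phi_neg_isBigO_one tendsto_natCast_atTop_atTop hc
  have hr : 0 < √ρ := Real.sqrt_pos.2 hρ.1
  have hσ1 : √(1 - ρ) < 1 := (Real.sqrt_lt' one_pos).2 (by linarith [hρ.1])
  obtain ⟨k, hσk, hk1⟩ := exists_between hσ1
  obtain ⟨δ, hδ, hk⟩ : ∃ δ > 0, √(1 - ρ) + √ρ * δ = k :=
    ⟨(k - √(1 - ρ)) / √ρ, div_pos (sub_pos.2 hσk) hr, by field_simp; ring⟩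
  have hbody :=
    tendsto_natCast_mul_phi_mul_Phi_pow id hctop ((Real.sqrt_nonneg _).trans hσk.le) hk1
  have htail := tendsto_mul_phi_mul_phi hctop hc hδ.ne'
  have hbound := ((hbody.mul_const (∫ w, |w| * phi w)).add htail).const_mul
    (2 * √ρ * √(1 - ρ))⁻¹
  simp only [id_eq, zero_mul, add_zero, mul_zero] at hbound
  refine squeeze_zero' (.of_forall fun n => ?_) ?_ hbound
  · exact mul_nonneg n.cast_nonneg (integral_nonneg fun z =>
      mul_nonneg (mul_nonneg (mul_nonneg (pow_nonneg (Phi_nonneg _) _) (phi_pos _).le)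
        (abs_nonneg _)) (phi_pos z).le)
  · filter_upwards [hctop.eventually_ge_atTop 0] with n hcn
    have hsplit : √(1 - ρ) * c n + √ρ * (δ * c n) = k * c n := by rw [← hk]; ring
    have hle := integral_Phi_dd_pow_mul_le hρ (n - 1) (c := c n) (mul_nonneg hδ.le hcn)
    rw [hsplit] at hle
    exact (mul_le_mul_of_nonneg_left hle n.cast_nonneg).trans_eq (by ring)

theorem second_term_tendsto_zero
    (ρ : ℝ) (hρ : ρ ∈ Set.Ioo (0:ℝ) 1) (α : ℝ) (hα : α ∈ Set.Ioo (0:ℝ) 1)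
    (αseq : ℕ → ℝ) (hαseq : ∀ n, αseq n ∈ Set.Ioo (0:ℝ) 1)
    (hlim : Tendsto (fun n : ℕ => (n : ℝ) * αseq n) atTop (nhds α))
    (c : ℕ → ℝ) (hc : ∀ n, Phi (-(c n)) = αseq n) :
    Tendsto (fun n : ℕ =>
        (n : ℝ) *
          ∫ z : ℝ, (Phi (dd ρ (c n) z)) ^ (n - 1) * phi (dd ρ (c n) z) *
            |G ρ (c n) z| * phi z)
      atTop (nhds 0) := by
  refine second_term_tendsto_zero_general hρ ?_
  simpa only [hc] using hlim.isBigO_one ℝ
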